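/- arXiv:2009.10102 — 3 statements merged into one kernel-verified Lean document; each statement's English description precedes it below -/
import Mathlib

section
/- Let n ≥ 2, 1 < p < ∞, s > −1 − (p−1)/(n−1), ε > 0, let U ⊆ ℝⁿ be open, and let u be a smooth function on U satisfying the regularized p-Laplace equation div((|Du|² + ε)^{(p−2)/2} Du) = 0 pointwise in U. Set μ := (|Du|² + ε)^{1/2}. Then there exists a constant C = C(n, p, s) > 0, independent of ε and u, such that for every smooth compactly supported function φ with support contained in U, ∫_U |D(μ^{(p−2+s)/2} Du)|² φ² dx ≤ C ∫_U μ^{p+s} |Dφ|² dx, where D(μ^{(p−2+s)/2} Du) denotes the Jacobian matrix of the vector field x ↦ (|Du(x)|² + ε)^{(p−2+s)/4} Du(x) and |·| its Hilbert–Schmidt (Frobenius) norm. -/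
/-!
Write `g = Du`, `H = D²u`, `a = |Du|² + ε = μ²`, `q = p − 2 + s`. The quadratic expression
`|H|² − (Δu)²` is the divergence of `H g − Δu g`. Multiplying by `φ² a^{q/2}` and integrating
(the resulting field has compact support) gives
`∫ a^{q/2} φ² F = − ∫ 2 φ a^{q/2} ⟨Dφ, H g − Δu g⟩`, where
`F = |H|² − (Δu)² + (q / a) (|H g|² − Δu ⟨H g, g⟩)`.

The equation reads `a Δu = −(p − 2) ⟨H g, g⟩`, and under this constraint `F ≥ c |H|²`
(`coercive`). To see it, write `g = r e` with `|e| = 1`, `t = r² / a ∈ [0, 1]`,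
`h = ⟨H e, e⟩`, `m = n − 1` and `k = 1 + (p − 2) t`. The block of `H` orthogonal to `e` has
trace `−k h`, so its squared norm is at least `k² h² / m` (`trace_ineq`); calling the excess `E`,
`F = k (1 + s t + k / m) h² + (2 + q t) (|H e|² − h²) + E`.
The factors `k`, `1 + s t + k / m` and `2 + q t` are affine in `t`, and their values at `t = 0` and
`t = 1` are positive, that of the second one at `t = 1` being `1 + s + (p − 1) / m`: this is exactly
the hypothesis on `s`.

Young's inequality absorbs the cross term (`cross_bound`), and `|D(μ^{q/2} Du)|²` is at most a
constant times `a^{q/2} |H|²` (`jac_bound`). All of this amounts to a pointwise inequality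
(`pointwise_estimate`) whose divergence term integrates to zero. Since only a neighbourhood of the
support of `φ` matters, `u` is first replaced by a smooth function on all of `ℝⁿ`
(`exists_global_extension`).
-/


/-- The gradient of `u : ℝⁿ → ℝ` at `x`, given by the partial derivatives. -/
noncomputable def grad {n : ℕ} (u : (Fin n → ℝ) → ℝ) (x : Fin n → ℝ) : Fin n → ℝ :=
  fun i => fderiv ℝ u x (Pi.single i 1)

/-- `μ := (|Du|² + ε)^{1/2}`. -/
noncomputable def mu {n : ℕ} (ε : ℝ) (u : (Fin n → ℝ) → ℝ) (x : Fin n → ℝ) : ℝ :=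
  Real.sqrt ((∑ i, grad u x i ^ 2) + ε)

/-- The Jacobian matrix of the vector field `x ↦ (|Du(x)|² + ε)^{(p−2+s)/4} Du(x)`,
i.e. of `μ^{(p−2+s)/2} Du`. -/
noncomputable def jacV {n : ℕ} (p s ε : ℝ) (u : (Fin n → ℝ) → ℝ) (x : Fin n → ℝ) :
    Matrix (Fin n) (Fin n) ℝ :=
  Matrix.of fun i j => fderiv ℝ
    (fun y => ((∑ k, grad u y k ^ 2) + ε) ^ ((p - 2 + s) / 4) * grad u y i) x (Pi.single j 1)

/-- The regularized `p`-Laplace equation `div((|Du|² + ε)^{(p−2)/2} Du) = 0` holds pointwise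
in `U`. -/
def RegularizedPLaplace {n : ℕ} (p ε : ℝ) (u : (Fin n → ℝ) → ℝ) (U : Set (Fin n → ℝ)) : Prop :=
  ∀ x ∈ U, ∑ i, fderiv ℝ
      (fun y => ((∑ j, grad u y j ^ 2) + ε) ^ ((p - 2) / 2) * grad u y i) x (Pi.single i 1) = 0

/-! ### Linear algebra: coercivity of the quadratic form -/

/-- The trace inequality `(tr M)² ≤ (n − 1) |M|²` for the compression `M` of the symmetric matrix
`H` to the orthogonal complement of a unit vector `e`, expressed through `v = H e` and
`h = ⟨H e, e⟩`. -/
theorem trace_ineq {n : ℕ} (hn : 2 ≤ n) (H : Fin n → Fin n → ℝ) (hH : ∀ i j, H i j = H j i)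
    (e : Fin n → ℝ) (he : ∑ i, e i ^ 2 = 1) (v : Fin n → ℝ) (hv : ∀ i, v i = ∑ j, H i j * e j)
    (h : ℝ) (hh : h = ∑ i, v i * e i) :
    ((∑ i, H i i) - h) ^ 2
      ≤ ((n : ℝ) - 1) * ((∑ i, ∑ j, H i j ^ 2) - 2 * (∑ i, v i ^ 2) + h ^ 2) := by
  have hn' : (2 : ℝ) ≤ n := by exact_mod_cast hn
  have hm : (0 : ℝ) < (n : ℝ) - 1 := by linarith
  set T := ∑ i, H i i with hT
  set S := ∑ i, ∑ j, H i j ^ 2 with hS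
  set V := ∑ i, v i ^ 2 with hV
  obtain ⟨l, hl⟩ : ∃ l : ℝ, l * ((n : ℝ) - 1) = T - h := ⟨(T - h) / ((n : ℝ) - 1), by field_simp⟩
  -- Expand `|M - l P|² ≥ 0`, with `P` the projection onto the complement of `e`; the choice of `l`
  -- minimizes this norm.
  have row : ∀ i, ∑ j, (H i j - e i * v j - v i * e j + (h + l) * (e i * e j)
      - l * (if i = j then 1 else 0)) ^ 2 =
      (∑ j, H i j ^ 2) + e i ^ 2 * V + v i ^ 2 + (h + l) ^ 2 * e i ^ 2 + l ^ 2
      - 2 * (e i * ∑ j, H i j * v j) - 2 * v i ^ 2 + 2 * (h + l) * (v i * e i) - 2 * l * H i i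
      + 2 * h * (v i * e i) - 2 * (h + l) * h * e i ^ 2 + 2 * l * (v i * e i)
      - 2 * (h + l) * (v i * e i) + 2 * l * (v i * e i) - 2 * (h + l) * l * e i ^ 2 := by
    intro i
    have d : ∀ f : Fin n → ℝ, ∑ j, f j * (if i = j then (1 : ℝ) else 0) = f i := by
      intro f; simp
    have : ∀ j, (H i j - e i * v j - v i * e j + (h + l) * (e i * e j)
      - l * (if i = j then 1 else 0)) ^ 2 = H i j ^ 2 + e i ^ 2 * v j ^ 2
      + (v i ^ 2 - 2 * (h + l) * (v i * e i) + (h + l) ^ 2 * e i ^ 2) * e j ^ 2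
      - 2 * e i * (H i j * v j) + (- 2 * v i + 2 * (h + l) * e i) * (H i j * e j)
      + (2 * e i * v i - 2 * (h + l) * e i ^ 2) * (v j * e j)
      + ((l ^ 2 - 2 * l * (H i j - e i * v j - v i * e j + (h + l) * (e i * e j)))
        * (if i = j then 1 else 0)) := by
      intro j; split_ifs <;> ring
    rw [Finset.sum_congr rfl fun j _ => this j]
    simp only [Finset.sum_add_distrib, Finset.sum_sub_distrib, ← Finset.mul_sum, d, he, ← hv, ← hh,
      ← hV]
    ring
  have cross : ∑ i, e i * ∑ j, H i j * v j = V := by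
    simp only [Finset.mul_sum]
    rw [Finset.sum_comm, hV]
    refine Finset.sum_congr rfl fun j _ => ?_
    rw [sq]
    nth_rewrite 2 [hv j]
    rw [Finset.sum_mul]
    exact Finset.sum_congr rfl fun i _ => by rw [hH i j]; ring
  have pos : 0 ≤ ∑ i, ∑ j, (H i j - e i * v j - v i * e j + (h + l) * (e i * e j)
      - l * (if i = j then 1 else 0)) ^ 2 :=
    Finset.sum_nonneg fun i _ => Finset.sum_nonneg fun j _ => sq_nonneg _
  simp only [row, Finset.sum_add_distrib, Finset.sum_sub_distrib, ← Finset.mul_sum,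
    ← Finset.sum_mul, he, ← hh, ← hV, cross, ← hT, ← hS, Finset.sum_const, Finset.card_univ,
    Fintype.card_fin, nsmul_eq_mul] at pos
  have key : 0 ≤ S - 2 * V + h ^ 2 - (T - h) * l := by
    have : (T - h) * l = 2 * (T - h) * l - l * (l * (n - 1)) := by rw [hl]; ring
    rw [this]; nlinarith
  calc (T - h) ^ 2 = ((n : ℝ) - 1) * ((T - h) * l) := by rw [← hl]; ring
    _ ≤ _ := by gcongr; linarith

/-- Coercivity in terms of the scalar invariants: `S = |H|²`, `T = tr H`, `V = |H e|²`,
`h = ⟨H e, e⟩` and `g = r e`. -/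
theorem coercive_scalar {m p s : ℝ} (hm1 : 1 ≤ m) (hp : 1 < p)
    (hs : s > -1 - (p - 1) / m) :
    ∃ c > 0, ∀ S T V h r a : ℝ, 0 < a → r ^ 2 ≤ a → T * a = - (p - 2) * (r ^ 2 * h) →
      h ^ 2 ≤ V → (T - h) ^ 2 ≤ m * (S - 2 * V + h ^ 2) →
      c * S ≤ S - T ^ 2 + (p - 2 + s) / a * (r ^ 2 * V - T * (r ^ 2 * h)) := by
  set b0 := min 2 (p + s) with hb0
  set k0 := min 1 (p - 1) with hk0
  set l0 := min 1 (1 + s + (p - 1) / m) with hl0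
  have hdiv : (p - 1) / m ≤ p - 1 := div_le_self (by linarith) hm1
  have b0p : 0 < b0 := lt_min (by norm_num) (by linarith)
  have k0p : 0 < k0 := lt_min (by norm_num) (by linarith)
  have l0p : 0 < l0 := lt_min (by norm_num) (by linarith)
  refine ⟨min 1 (min (b0 / 2) (k0 * l0 / (1 + p ^ 2))), by positivity, ?_⟩
  set c := min 1 (min (b0 / 2) (k0 * l0 / (1 + p ^ 2))) with hc
  have c0 : 0 < c := by positivity
  have c1 : c ≤ 1 := min_le_left _ _
  have c2 : c ≤ b0 / 2 := (min_le_right _ _).trans (min_le_left _ _)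
  have c3 : c * (1 + p ^ 2) ≤ k0 * l0 := by
    rw [← le_div_iff₀ (by positivity)]
    exact (min_le_right _ _).trans (min_le_right _ _)
  intro S T V h r a ha hga hT cs tr
  obtain ⟨t, ht⟩ : ∃ t : ℝ, t = r ^ 2 / a := ⟨_, rfl⟩
  have t0 : 0 ≤ t := by rw [ht]; positivity
  have t1 : t ≤ 1 := by rw [ht, div_le_one ha]; exact hga
  have hra : r ^ 2 = t * a := by rw [ht]; field_simp
  have hT' : T = - (p - 2) * t * h := by
    rw [hra] at hT
    exact mul_right_cancel₀ ha.ne' (by linarith)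
  have goal' : (p - 2 + s) / a * (r ^ 2 * V - T * (r ^ 2 * h))
      = (p - 2 + s) * (t * V - T * t * h) := by rw [hra]; field_simp
  rw [goal']
  obtain ⟨k, hk⟩ : ∃ k : ℝ, k = 1 + (p - 2) * t := ⟨_, rfl⟩
  have hTh : T - h = - k * h := by rw [hT', hk]; ring
  rw [hTh] at tr
  obtain ⟨E, hE⟩ : ∃ E : ℝ, E = S - 2 * V + h ^ 2 - k ^ 2 * h ^ 2 / m := ⟨_, rfl⟩
  have E0 : 0 ≤ E := by
    rw [hE, sub_nonneg, div_le_iff₀ (by linarith)]; linarith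
  have kk0 : k0 ≤ k := by
    have h1 : k0 ≤ 1 := min_le_left _ _
    have h2 : k0 ≤ p - 1 := min_le_right _ _
    rw [hk]
    linarith [mul_nonneg (sub_nonneg.2 t1) (sub_nonneg.2 h1), mul_nonneg t0 (sub_nonneg.2 h2)]
  have kp : k ≤ p := by
    rw [hk]
    linarith [mul_nonneg (sub_nonneg.2 t1) (sub_nonneg.2 hp.le)]
  -- Affine in `t`, with nonnegative weights `1 - t` and `t` on the two endpoint values.
  have ll0 : l0 ≤ 1 + s * t + k / m := by
    have h1 : l0 ≤ 1 := min_le_left _ _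
    have h2 : l0 ≤ 1 + s + (p - 1) / m := min_le_right _ _
    have h3 : 1 + s * t + k / m = (1 - t) * (1 + 1 / m) + t * (1 + s + (p - 1) / m) := by
      rw [hk]; field_simp; ring
    have h4 : 0 < 1 / m := by positivity
    have h5 : l0 ≤ 1 + 1 / m := by linarith
    rw [h3]
    linarith [mul_nonneg (sub_nonneg.2 t1) (sub_nonneg.2 h5), mul_nonneg t0 (sub_nonneg.2 h2)]
  have bb0 : b0 ≤ 2 + (p - 2 + s) * t := by
    have h1 : b0 ≤ 2 := min_le_left _ _
    have h2 : b0 ≤ p + s := min_le_right _ _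
    linarith [mul_nonneg (sub_nonneg.2 t1) (sub_nonneg.2 h1), mul_nonneg t0 (sub_nonneg.2 h2)]
  have hF : S - T ^ 2 + (p - 2 + s) * (t * V - T * t * h)
      = (k * (1 + s * t + k / m)) * h ^ 2 + (2 + (p - 2 + s) * t) * (V - h ^ 2) + E := by
    rw [hE, hT', hk]; ring
  have hS : S = (1 + k ^ 2 / m) * h ^ 2 + 2 * (V - h ^ 2) + E := by rw [hE]; ring
  have i1 : c * (1 + k ^ 2 / m) ≤ k * (1 + s * t + k / m) := by
    have j1 : k ^ 2 / m ≤ p ^ 2 :=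
      (div_le_self (sq_nonneg _) hm1).trans (pow_le_pow_left₀ (by linarith) kp 2)
    calc c * (1 + k ^ 2 / m) ≤ c * (1 + p ^ 2) := by gcongr
      _ ≤ k0 * l0 := c3
      _ ≤ _ := by gcongr; linarith
  rw [hF, hS]
  have e1 := mul_le_mul_of_nonneg_right i1 (sq_nonneg h)
  have e2 : c * 2 * (V - h ^ 2) ≤ (2 + (p - 2 + s) * t) * (V - h ^ 2) :=
    mul_le_mul_of_nonneg_right (by linarith) (by linarith)
  have e3 := mul_le_mul_of_nonneg_right c1 E0
  linarith

/-- Pointwise coercivity for a symmetric matrix `H` (the Hessian) and a vector `g` (the gradient)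
related by the regularized equation in nondivergence form. -/
theorem coercive {n : ℕ} (hn : 2 ≤ n) {p s : ℝ} (hp : 1 < p)
    (hs : s > -1 - (p - 1) / ((n : ℝ) - 1)) :
    ∃ c > 0, ∀ (H : Fin n → Fin n → ℝ), (∀ i j, H i j = H j i) → ∀ (g : Fin n → ℝ) (a : ℝ),
      0 < a → ∑ i, g i ^ 2 ≤ a →
      (∑ i, H i i) * a = - (p - 2) * ∑ i, (∑ j, H i j * g j) * g i →
      c * ∑ i, ∑ j, H i j ^ 2 ≤ (∑ i, ∑ j, H i j ^ 2) - (∑ i, H i i) ^ 2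
        + (p - 2 + s) / a * ((∑ i, (∑ j, H i j * g j) ^ 2)
          - (∑ i, H i i) * ∑ i, (∑ j, H i j * g j) * g i) := by
  have hn' : (2 : ℝ) ≤ n := by exact_mod_cast hn
  obtain ⟨c, c0, hc⟩ := coercive_scalar (m := (n : ℝ) - 1) (by linarith) hp hs
  refine ⟨c, c0, ?_⟩
  intro H hH g a ha hga hT
  -- If `g = 0`, any unit vector serves as `e`.
  obtain ⟨r, e, he, hg⟩ : ∃ (r : ℝ) (e : Fin n → ℝ), ∑ i, e i ^ 2 = 1 ∧ ∀ i, g i = r * e i := by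
    by_cases h0 : ∑ i, g i ^ 2 = 0
    · refine ⟨0, Pi.single ⟨0, by omega⟩ 1, ?_, fun i => ?_⟩
      · rw [Finset.sum_eq_single ⟨0, by omega⟩] <;> simp +contextual
      · have := (Finset.sum_eq_zero_iff_of_nonneg (fun i _ => sq_nonneg (g i))).1 h0 i
          (Finset.mem_univ i)
        simpa using this
    · have h1 : 0 < ∑ i, g i ^ 2 :=
        lt_of_le_of_ne (Finset.sum_nonneg fun i _ => sq_nonneg _) (Ne.symm h0)
      have h2 := Real.sqrt_pos.2 h1
      refine ⟨√(∑ i, g i ^ 2), fun i => g i / √(∑ i, g i ^ 2), ?_, fun i => by field_simp⟩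
      simp only [div_pow, ← Finset.sum_div, Real.sq_sqrt h1.le]
      field_simp
  obtain ⟨v, hv⟩ : ∃ v : Fin n → ℝ, ∀ i, v i = ∑ j, H i j * e j := ⟨_, fun _ => rfl⟩
  obtain ⟨h, hh⟩ : ∃ h : ℝ, h = ∑ i, v i * e i := ⟨_, rfl⟩
  have tr := trace_ineq hn H hH e he v hv h hh
  have cs : h ^ 2 ≤ ∑ i, v i ^ 2 := by
    have := Finset.sum_mul_sq_le_sq_mul_sq Finset.univ v e
    rwa [← hh, he, mul_one] at this
  have Hg : ∀ i, ∑ j, H i j * g j = r * v i := fun i => by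
    rw [hv, Finset.mul_sum]
    exact Finset.sum_congr rfl fun j _ => by rw [hg]; ring
  have Hgg : ∑ i, (∑ j, H i j * g j) * g i = r ^ 2 * h := by
    rw [hh, Finset.mul_sum]
    exact Finset.sum_congr rfl fun j _ => by rw [Hg, hg]; ring
  have Hg2 : ∑ i, (∑ j, H i j * g j) ^ 2 = r ^ 2 * ∑ i, v i ^ 2 := by
    rw [Finset.mul_sum]
    exact Finset.sum_congr rfl fun j _ => by rw [Hg]; ring
  have gr : ∑ i, g i ^ 2 = r ^ 2 := by
    rw [← mul_one (r ^ 2), ← he, Finset.mul_sum]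
    exact Finset.sum_congr rfl fun j _ => by rw [hg]; ring
  rw [Hgg] at hT ⊢
  rw [Hg2]
  rw [gr] at hga
  exact hc _ _ _ h r a ha hga hT cs tr

theorem integral_pd_eq_zero' : True := trivial

/-! ### Partial derivatives -/

/-- The partial derivative `∂ᵢ f`. -/
noncomputable def pd {n : ℕ} (i : Fin n) (f : (Fin n → ℝ) → ℝ) (x : Fin n → ℝ) : ℝ :=
  fderiv ℝ f x (Pi.single i 1)

section pd
variable {n : ℕ} {f g : (Fin n → ℝ) → ℝ} {x : Fin n → ℝ}

theorem contDiff_pd (i : Fin n) (hf : ContDiff ℝ (⊤ : ℕ∞) f) : ContDiff ℝ (⊤ : ℕ∞) (pd i f) :=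
  (hf.fderiv_right (m := (⊤ : ℕ∞)) (by simp)).clm_apply contDiff_const

theorem pd_comm (i j : Fin n) (hf : ContDiff ℝ (⊤ : ℕ∞) f) : pd i (pd j f) = pd j (pd i f) := by
  ext x
  have hd : DifferentiableAt ℝ (fderiv ℝ f) x :=
    (hf.fderiv_right (m := (⊤ : ℕ∞)) (by simp)).differentiable (by simp) x
  have key : ∀ k l : Fin n, pd k (pd l f) x
      = fderiv ℝ (fderiv ℝ f) x (Pi.single k 1) (Pi.single l 1) := by
    intro k l
    change fderiv ℝ (fun y => fderiv ℝ f y (Pi.single l 1)) x (Pi.single k 1) = _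
    rw [fderiv_clm_apply hd (differentiableAt_const _)]
    simp
  have hs : IsSymmSndFDerivAt ℝ f x := hf.contDiffAt.isSymmSndFDerivAt
    (by
      simp only [minSmoothness_of_isRCLikeNormedField]
      exact WithTop.coe_le_coe.2 (le_top : (2 : ℕ∞) ≤ ⊤))
  rw [key, key]
  exact hs _ _

theorem pd_mul (i : Fin n) (hf : DifferentiableAt ℝ f x) (hg : DifferentiableAt ℝ g x) :
    pd i (fun y => f y * g y) x = f x * pd i g x + pd i f x * g x := by
  simp only [pd]
  rw [fderiv_fun_mul hf hg]
  simp; ring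

theorem pd_sub (i : Fin n) (hf : DifferentiableAt ℝ f x) (hg : DifferentiableAt ℝ g x) :
    pd i (fun y => f y - g y) x = pd i f x - pd i g x := by
  simp only [pd]
  rw [fderiv_fun_sub hf hg]
  simp

theorem pd_rpow (i : Fin n) (hf : DifferentiableAt ℝ f x) (h0 : 0 < f x) (r : ℝ) :
    pd i (fun y => f y ^ r) x = r * (f x ^ r / f x) * pd i f x := by
  simp only [pd]
  rw [(hf.hasFDerivAt.rpow_const (p := r) (Or.inl h0.ne')).fderiv, Real.rpow_sub_one h0.ne']
  simp

theorem pd_sq (i : Fin n) (hf : DifferentiableAt ℝ f x) :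
    pd i (fun y => f y ^ 2) x = 2 * f x * pd i f x := by
  simp only [sq]
  rw [pd_mul i hf hf]; ring

/-- `∂ⱼ (|Dv|² + ε) = 2 ∑ₖ (∂ⱼ ∂ₖ v) (∂ₖ v)`. -/
theorem pd_energy (ε : ℝ) {v : (Fin n → ℝ) → ℝ} (hv : ContDiff ℝ (⊤ : ℕ∞) v) (j : Fin n)
    (x : Fin n → ℝ) :
    pd j (fun y => (∑ k, grad v y k ^ 2) + ε) x = 2 * ∑ k, pd j (pd k v) x * grad v x k := by
  have hd : ∀ k, DifferentiableAt ℝ (fun y => grad v y k) x := fun k =>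
    (contDiff_pd k hv).differentiable (by simp) x
  have h1 : pd j (fun y => (∑ k, grad v y k ^ 2) + ε) x
      = ∑ k, pd j (fun y => grad v y k ^ 2) x := by
    simp only [pd]
    rw [fderiv_add_const, fderiv_fun_sum fun k _ => DifferentiableAt.fun_pow (hd k) 2]
    simp
  rw [h1, Finset.mul_sum]
  refine Finset.sum_congr rfl fun k _ => ?_
  rw [pd_sq j (hd k)]
  change 2 * grad v x k * pd j (pd k v) x = _
  ring

theorem integral_pd_eq_zero (j : Fin n) (hf : ContDiff ℝ (⊤ : ℕ∞) f) (hc : HasCompactSupport f) :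
    MeasureTheory.Integrable (pd j f) ∧ ∫ x, pd j f x = 0 := by
  have i0 : MeasureTheory.Integrable f := hf.continuous.integrable_of_hasCompactSupport hc
  have i1 : MeasureTheory.Integrable (pd j f) :=
    (contDiff_pd j hf).continuous.integrable_of_hasCompactSupport (hc.fderiv_apply ℝ _)
  have i1' : MeasureTheory.Integrable (fun x => fderiv ℝ f x (Pi.single j 1))
    MeasureTheory.volume := i1
  refine ⟨i1, ?_⟩
  have := integral_mul_fderiv_eq_neg_fderiv_mul_of_integrable (𝕜 := ℝ)
    (μ := MeasureTheory.volume) (f := fun _ : Fin n → ℝ => (1 : ℝ)) (g := f) (v := Pi.single j 1)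
    (by simp) (by simpa using i1') (by simpa using i0) (by simp)
    (fun x _ => hf.differentiable (by simp) x)
  simpa [pd] using this

end pd

/-! ### Pointwise bounds for the Jacobian and the cross term -/

/-- Bound for the Jacobian of `a^{q/4} g` by the Hessian, with `r = a^{q/4}`. -/
theorem jac_bound {n : ℕ} (H : Fin n → Fin n → ℝ) (g : Fin n → ℝ) (a r q : ℝ) (ha : 0 < a)
    (hga : ∑ i, g i ^ 2 ≤ a) :
    ∑ i, ∑ j, (r * (H i j + q / 2 / a * (∑ k, H k j * g k) * g i)) ^ 2
      ≤ (2 + q ^ 2 / 2) * (r ^ 2 * ∑ i, ∑ j, H i j ^ 2) := by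
  have hV : ∑ j, (∑ k, H k j * g k) ^ 2 ≤ a * ∑ i, ∑ j, H i j ^ 2 := by
    rw [Finset.sum_comm, Finset.mul_sum]
    refine Finset.sum_le_sum fun j _ => ?_
    refine (Finset.sum_mul_sq_le_sq_mul_sq Finset.univ (fun k => H k j) g).trans ?_
    rw [mul_comm]
    exact mul_le_mul_of_nonneg_right hga (Finset.sum_nonneg fun _ _ => sq_nonneg _)
  have h1 : ∀ i j, (r * (H i j + q / 2 / a * (∑ k, H k j * g k) * g i)) ^ 2
      ≤ 2 * r ^ 2 * H i j ^ 2
        + r ^ 2 * (q ^ 2 / 2 / a ^ 2) * (g i ^ 2 * (∑ k, H k j * g k) ^ 2) := by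
    intro i j
    have e : 2 * r ^ 2 * H i j ^ 2
        + r ^ 2 * (q ^ 2 / 2 / a ^ 2) * (g i ^ 2 * (∑ k, H k j * g k) ^ 2)
        - (r * (H i j + q / 2 / a * (∑ k, H k j * g k) * g i)) ^ 2
        = (r * (H i j - q / 2 / a * (∑ k, H k j * g k) * g i)) ^ 2 := by
      field_simp; ring
    linarith [sq_nonneg (r * (H i j - q / 2 / a * (∑ k, H k j * g k) * g i))]
  calc _ ≤ ∑ i, ∑ j, (2 * r ^ 2 * H i j ^ 2
        + r ^ 2 * (q ^ 2 / 2 / a ^ 2) * (g i ^ 2 * (∑ k, H k j * g k) ^ 2)) :=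
      Finset.sum_le_sum fun i _ => Finset.sum_le_sum fun j _ => h1 i j
    _ = 2 * r ^ 2 * (∑ i, ∑ j, H i j ^ 2) + r ^ 2 * (q ^ 2 / 2 / a ^ 2)
          * ((∑ i, g i ^ 2) * ∑ j, (∑ k, H k j * g k) ^ 2) := by
      simp only [Finset.sum_add_distrib, ← Finset.mul_sum, ← Finset.sum_mul]
    _ ≤ 2 * r ^ 2 * (∑ i, ∑ j, H i j ^ 2) + r ^ 2 * (q ^ 2 / 2 / a ^ 2)
          * (a * (a * ∑ i, ∑ j, H i j ^ 2)) := by gcongr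
    _ = _ := by field_simp

/-- Absorption of the term coming from the derivative `d` of the test function, with value `f`.
The coefficient `c / 2` leaves half of the coercivity constant `c` of `coercive`. -/
theorem cross_bound {n : ℕ} (H : Fin n → Fin n → ℝ) (g d : Fin n → ℝ) (a f c : ℝ) (ha : 0 < a)
    (hc : 0 < c) (hga : ∑ i, g i ^ 2 ≤ a) :
    -(c / 2 * f ^ 2 * ∑ i, ∑ j, H i j ^ 2) - 8 * n / c * a * ∑ j, d j ^ 2
      ≤ ∑ i, ∑ j, 2 * f * d j * (H i j * g i - H i i * g j) := by
  have h1 : ∀ i j, -(c / 4 * f ^ 2 / a * (H i j ^ 2 * g i ^ 2 + H i i ^ 2 * g j ^ 2))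
      - 8 / c * a * d j ^ 2 ≤ 2 * f * d j * (H i j * g i - H i i * g j) := by
    intro i j
    have e : 2 * f * d j * (H i j * g i - H i i * g j)
      - (-(c / 4 * f ^ 2 / a * (H i j ^ 2 * g i ^ 2 + H i i ^ 2 * g j ^ 2))
      - 8 / c * a * d j ^ 2) = c / 8 / a * (f * (H i j * g i + H i i * g j)) ^ 2
       + 8 / (c * a) * (a * d j + c / 8 * f * (H i j * g i - H i i * g j)) ^ 2 := by
      field_simp; ring
    have : 0 ≤ c / 8 / a * (f * (H i j * g i + H i i * g j)) ^ 2
       + 8 / (c * a) * (a * d j + c / 8 * f * (H i j * g i - H i i * g j)) ^ 2 := by positivity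
    linarith
  have h2 : ∑ i, ∑ j, (H i j ^ 2 * g i ^ 2 + H i i ^ 2 * g j ^ 2)
      ≤ 2 * a * ∑ i, ∑ j, H i j ^ 2 := by
    have hg : ∀ i, g i ^ 2 ≤ a := fun i =>
      (Finset.single_le_sum (f := fun i => g i ^ 2) (fun i _ => sq_nonneg _)
        (Finset.mem_univ i)).trans hga
    have : ∀ i, ∑ j, (H i j ^ 2 * g i ^ 2 + H i i ^ 2 * g j ^ 2) ≤ 2 * a * ∑ j, H i j ^ 2 := by
      intro i
      have a1 : H i i ^ 2 ≤ ∑ j, H i j ^ 2 :=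
        Finset.single_le_sum (f := fun j => H i j ^ 2) (fun i _ => sq_nonneg _)
          (Finset.mem_univ i)
      rw [Finset.sum_add_distrib, ← Finset.sum_mul, ← Finset.mul_sum]
      have a2 : 0 ≤ ∑ j, H i j ^ 2 := Finset.sum_nonneg fun _ _ => sq_nonneg _
      have a3 : 0 ≤ ∑ j, g j ^ 2 := Finset.sum_nonneg fun _ _ => sq_nonneg _
      have := mul_le_mul_of_nonneg_left (hg i) a2
      have := mul_le_mul a1 hga a3 a2
      linarith
    rw [Finset.mul_sum]
    exact Finset.sum_le_sum fun i _ => this i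
  calc _ ≤ ∑ i : Fin n, ∑ j, (-(c / 4 * f ^ 2 / a * (H i j ^ 2 * g i ^ 2 + H i i ^ 2 * g j ^ 2))
      - 8 / c * a * d j ^ 2) := by
        simp only [Finset.sum_sub_distrib, Finset.sum_neg_distrib, ← Finset.mul_sum,
          Finset.sum_const, Finset.card_univ, Fintype.card_fin, nsmul_eq_mul]
        have := mul_le_mul_of_nonneg_left h2 (show 0 ≤ c / 4 * f ^ 2 / a by positivity)
        have e : c / 4 * f ^ 2 / a * (2 * a * ∑ i, ∑ j, H i j ^ 2)
          = c / 2 * f ^ 2 * ∑ i, ∑ j, H i j ^ 2 := by field_simp; ring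
        have e2 : 8 * n / c * a * ∑ j, d j ^ 2 = n * (8 / c * a * ∑ j, d j ^ 2) := by ring
        linarith
    _ ≤ _ := Finset.sum_le_sum fun i _ => Finset.sum_le_sum fun j _ => h1 i j

/-! ### The divergence identity -/

/-- The summands of the compactly supported field `φ² a^{q/2} (D²v Dv − Δv Dv)`, where
`a = |Dv|² + ε`: its `j`-th component is the sum over `i` of `flux q ε v φ i j`. -/
noncomputable def flux {n : ℕ} (q ε : ℝ) (v φ : (Fin n → ℝ) → ℝ) (i j : Fin n)
    (y : Fin n → ℝ) : ℝ :=
  φ y ^ 2 * ((∑ k, grad v y k ^ 2) + ε) ^ (q / 2)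
    * (pd j (pd i v) y * pd i v y - pd i (pd i v) y * pd j v y)

section flux
variable {n : ℕ} {ε : ℝ} {v φ : (Fin n → ℝ) → ℝ}

theorem energy_pos (hε : 0 < ε) (v : (Fin n → ℝ) → ℝ) (x : Fin n → ℝ) :
    0 < (∑ k, grad v x k ^ 2) + ε :=
  add_pos_of_nonneg_of_pos (Finset.sum_nonneg fun _ _ => sq_nonneg _) hε

theorem contDiff_energy (hv : ContDiff ℝ (⊤ : ℕ∞) v) :
    ContDiff ℝ (⊤ : ℕ∞) (fun y => (∑ k, grad v y k ^ 2) + ε) :=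
  (ContDiff.sum fun k _ => (contDiff_pd k hv).pow 2).add contDiff_const

theorem contDiff_energy_rpow (hε : 0 < ε) (hv : ContDiff ℝ (⊤ : ℕ∞) v) (r : ℝ) :
    ContDiff ℝ (⊤ : ℕ∞) (fun y => ((∑ k, grad v y k ^ 2) + ε) ^ r) :=
  (contDiff_energy hv).rpow_const_of_ne fun x => (energy_pos hε v x).ne'

theorem contDiff_flux (hε : 0 < ε) (hv : ContDiff ℝ (⊤ : ℕ∞) v) (hφ : ContDiff ℝ (⊤ : ℕ∞) φ)
    (q : ℝ) (i j : Fin n) : ContDiff ℝ (⊤ : ℕ∞) (flux q ε v φ i j) :=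
  ((hφ.pow 2).mul (contDiff_energy_rpow hε hv _)).mul
    (((contDiff_pd j (contDiff_pd i hv)).mul (contDiff_pd i hv)).sub
      ((contDiff_pd i (contDiff_pd i hv)).mul (contDiff_pd j hv)))

theorem pd_flux (hε : 0 < ε) (hv : ContDiff ℝ (⊤ : ℕ∞) v) (hφ : ContDiff ℝ (⊤ : ℕ∞) φ)
    (q : ℝ) (i j : Fin n) (x : Fin n → ℝ) (a : ℝ) (ha : a = (∑ k, grad v x k ^ 2) + ε) :
    pd j (flux q ε v φ i j) x = a ^ (q / 2) * (φ x ^ 2 * (pd j (pd i v) x ^ 2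
        + pd j (pd j (pd i v)) x * pd i v x - pd i (pd i v) x * pd j (pd j v) x
        - pd j (pd i (pd i v)) x * pd j v x
        + q / a * ((∑ k, pd j (pd k v) x * pd k v x)
            * (pd j (pd i v) x * pd i v x - pd i (pd i v) x * pd j v x)))
      + 2 * φ x * pd j φ x * (pd j (pd i v) x * pd i v x - pd i (pd i v) x * pd j v x)) := by
  have d : ∀ {f : (Fin n → ℝ) → ℝ}, ContDiff ℝ (⊤ : ℕ∞) f → DifferentiableAt ℝ f x :=
    fun hf => hf.differentiable (by simp) x
  have hY := ((contDiff_pd j (contDiff_pd i hv)).mul (contDiff_pd i hv)).sub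
      ((contDiff_pd i (contDiff_pd i hv)).mul (contDiff_pd j hv))
  have hW := contDiff_energy_rpow hε hv (q / 2)
  have ha0 : a ≠ 0 := by rw [ha]; exact (energy_pos hε v x).ne'
  unfold flux
  rw [pd_mul j (d ((hφ.pow 2).mul hW)) (d hY), pd_mul j (d (hφ.pow 2)) (d hW),
    pd_sub j (d ((contDiff_pd j (contDiff_pd i hv)).mul (contDiff_pd i hv)))
      (d ((contDiff_pd i (contDiff_pd i hv)).mul (contDiff_pd j hv))),
    pd_mul j (d (contDiff_pd j (contDiff_pd i hv))) (d (contDiff_pd i hv)),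
    pd_mul j (d (contDiff_pd i (contDiff_pd i hv))) (d (contDiff_pd j hv)),
    pd_sq j (d hφ), pd_rpow j (d (contDiff_energy hv)) (energy_pos hε v x), pd_energy ε hv, ← ha]
  change _ = a ^ (q / 2) * (φ x ^ 2 * (_ + q / a * ((∑ k, pd j (pd k v) x * grad v x k) * _)) + _)
  field_simp
  ring

/-- The divergence of the field: the third derivatives of `v` cancel. -/
theorem sum_pd_flux (hε : 0 < ε) (hv : ContDiff ℝ (⊤ : ℕ∞) v) (hφ : ContDiff ℝ (⊤ : ℕ∞) φ)
    (q : ℝ) (x : Fin n → ℝ) (a : ℝ) (ha : a = (∑ k, grad v x k ^ 2) + ε)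
    (H : Fin n → Fin n → ℝ) (hH : ∀ i j, H i j = pd j (pd i v) x)
    (g : Fin n → ℝ) (hg : ∀ i, g i = pd i v x) :
    ∑ i, ∑ j, pd j (flux q ε v φ i j) x = a ^ (q / 2) * (φ x ^ 2 * ((∑ i, ∑ j, H i j ^ 2)
        - (∑ i, H i i) ^ 2 + q / a * ((∑ i, (∑ j, H i j * g j) ^ 2)
          - (∑ i, H i i) * ∑ i, (∑ j, H i j * g j) * g i))
      + ∑ i, ∑ j, 2 * φ x * pd j φ x * (H i j * g i - H i i * g j)) := by
  have hs : ∀ i j, H i j = H j i := fun i j => by rw [hH, hH, pd_comm j i hv]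
  have hG : ∀ j, ∑ k, H k j * g k = ∑ k, H j k * g k := fun j =>
    Finset.sum_congr rfl fun k _ => by rw [hs]
  have third : ∑ i, ∑ j, pd j (pd j (pd i v)) x * g i
      = ∑ i, ∑ j, pd j (pd i (pd i v)) x * g j := by
    rw [Finset.sum_comm]
    refine Finset.sum_congr rfl fun i _ => Finset.sum_congr rfl fun j _ => ?_
    rw [pd_comm i j hv, pd_comm i j (contDiff_pd i hv)]
  have e1 : ∑ i, ∑ j, (∑ k, H j k * g k) * (H i j * g i) = ∑ i, (∑ j, H i j * g j) ^ 2 := by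
    rw [Finset.sum_comm]
    refine Finset.sum_congr rfl fun j _ => ?_
    rw [← Finset.mul_sum, sq]
    congr 1
    exact Finset.sum_congr rfl fun i _ => by rw [hs]
  have e2 : ∑ i, ∑ j, (∑ k, H j k * g k) * (H i i * g j)
      = (∑ i, H i i) * ∑ i, (∑ j, H i j * g j) * g i := by
    rw [Finset.sum_mul_sum]
    exact Finset.sum_congr rfl fun i _ => Finset.sum_congr rfl fun j _ => by ring
  have e3 : ∑ i, ∑ j, H i i * H j j = (∑ i, H i i) ^ 2 := by rw [sq, Finset.sum_mul_sum]
  simp only [pd_flux hε hv hφ q _ _ x a ha, ← hH, ← hg]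
  simp only [hG]
  rw [← e1, ← e2, ← e3]
  simp only [← Finset.mul_sum, Finset.sum_add_distrib]
  simp only [mul_sub, Finset.sum_add_distrib, Finset.sum_sub_distrib]
  simp only [← Finset.mul_sum]
  linear_combination (a ^ (q / 2) * φ x ^ 2) * third

/-- The regularized equation in nondivergence form, `a Δv = −(p − 2) ⟨D²v Dv, Dv⟩`. -/
theorem trace_eq (hε : 0 < ε) (hv : ContDiff ℝ (⊤ : ℕ∞) v) (p : ℝ) (x : Fin n → ℝ)
    (a : ℝ) (ha : a = (∑ k, grad v x k ^ 2) + ε)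
    (H : Fin n → Fin n → ℝ) (hH : ∀ i j, H i j = pd j (pd i v) x)
    (g : Fin n → ℝ) (hg : ∀ i, g i = pd i v x)
    (h : ∑ i, fderiv ℝ (fun y => ((∑ j, grad v y j ^ 2) + ε) ^ ((p - 2) / 2) * grad v y i) x
      (Pi.single i 1) = 0) :
    (∑ i, H i i) * a = - (p - 2) * ∑ i, (∑ j, H i j * g j) * g i := by
  have d : ∀ {f : (Fin n → ℝ) → ℝ}, ContDiff ℝ (⊤ : ℕ∞) f → DifferentiableAt ℝ f x :=
    fun hf => hf.differentiable (by simp) x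
  have ha0 : 0 < a := by rw [ha]; exact energy_pos hε v x
  have hs : ∀ i j, H i j = H j i := fun i j => by rw [hH, hH, pd_comm j i hv]
  have key : ∀ i, fderiv ℝ (fun y => ((∑ j, grad v y j ^ 2) + ε) ^ ((p - 2) / 2) * grad v y i) x
      (Pi.single i 1) = a ^ ((p - 2) / 2) / a *
        (H i i * a + (p - 2) * ((∑ j, H i j * g j) * g i)) := by
    intro i
    change pd i (fun y => ((∑ j, grad v y j ^ 2) + ε) ^ ((p - 2) / 2) * pd i v y) x = _
    rw [pd_mul i (d (contDiff_energy_rpow hε hv _)) (d (contDiff_pd i hv)),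
      pd_rpow i (d (contDiff_energy hv)) (energy_pos hε v x), pd_energy ε hv, ← ha,
      ← hH, ← hg]
    have : ∑ k, pd i (pd k v) x * grad v x k = ∑ j, H i j * g j :=
      Finset.sum_congr rfl fun k _ => by rw [hs, hH, hg]; rfl
    rw [this]
    field_simp
  rw [Finset.sum_congr rfl fun i _ => key i, ← Finset.mul_sum, Finset.sum_add_distrib,
    ← Finset.sum_mul, ← Finset.mul_sum] at h
  have : a ^ ((p - 2) / 2) / a ≠ 0 := by positivity
  have := (mul_eq_zero.1 h).resolve_left this
  linarith

theorem jacV_eq (hε : 0 < ε) (hv : ContDiff ℝ (⊤ : ℕ∞) v) (p s : ℝ) (x : Fin n → ℝ)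
    (a : ℝ) (ha : a = (∑ k, grad v x k ^ 2) + ε)
    (H : Fin n → Fin n → ℝ) (hH : ∀ i j, H i j = pd j (pd i v) x)
    (g : Fin n → ℝ) (hg : ∀ i, g i = pd i v x) (i j : Fin n) :
    jacV p s ε v x i j = a ^ ((p - 2 + s) / 4)
      * (H i j + (p - 2 + s) / 2 / a * (∑ k, H k j * g k) * g i) := by
  have d : ∀ {f : (Fin n → ℝ) → ℝ}, ContDiff ℝ (⊤ : ℕ∞) f → DifferentiableAt ℝ f x :=
    fun hf => hf.differentiable (by simp) x
  have ha0 : 0 < a := by rw [ha]; exact energy_pos hε v x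
  change pd j (fun y => ((∑ j, grad v y j ^ 2) + ε) ^ ((p - 2 + s) / 4) * pd i v y) x = _
  rw [pd_mul j (d (contDiff_energy_rpow hε hv _)) (d (contDiff_pd i hv)),
    pd_rpow j (d (contDiff_energy hv)) (energy_pos hε v x), pd_energy ε hv, ← ha,
    ← hH, ← hg]
  have : ∑ k, pd j (pd k v) x * grad v x k = ∑ k, H k j * g k :=
    Finset.sum_congr rfl fun k _ => by rw [hH, hg]; rfl
  rw [this]
  field_simp
  ring

/-- The estimate before integration, for a smooth `v` on the whole space satisfying the equation at
`x`; the term with the constant `K` is a divergence. -/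
theorem pointwise_estimate (hn : 2 ≤ n) {p s : ℝ} (hp : 1 < p)
    (hs : s > -1 - (p - 1) / ((n : ℝ) - 1)) :
    ∃ C > 0, ∃ K > 0, ∀ (ε : ℝ), 0 < ε → ∀ (v : (Fin n → ℝ) → ℝ), ContDiff ℝ (⊤ : ℕ∞) v →
      ∀ (φ : (Fin n → ℝ) → ℝ), ContDiff ℝ (⊤ : ℕ∞) φ → ∀ x,
      ∑ i, fderiv ℝ (fun y => ((∑ j, grad v y j ^ 2) + ε) ^ ((p - 2) / 2) * grad v y i) x
        (Pi.single i 1) = 0 →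
      (∑ i, ∑ j, jacV p s ε v x i j ^ 2) * φ x ^ 2
        ≤ K * (∑ i, ∑ j, pd j (flux (p - 2 + s) ε v φ i j) x)
          + C * (mu ε v x ^ (p + s) * ∑ i, pd i φ x ^ 2) := by
  obtain ⟨c, c0, hc⟩ := coercive hn hp hs
  set q := p - 2 + s with hq
  have hn0 : (0 : ℝ) < n := by exact_mod_cast (by omega : 0 < n)
  refine ⟨(2 + q ^ 2 / 2) * (2 / c) * (8 * n / c), by positivity,
    (2 + q ^ 2 / 2) * (2 / c), by positivity, ?_⟩
  intro ε hε v hv φ hφ x hx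
  obtain ⟨a, ha⟩ : ∃ a : ℝ, a = (∑ k, grad v x k ^ 2) + ε := ⟨_, rfl⟩
  obtain ⟨H, hH⟩ : ∃ H : Fin n → Fin n → ℝ, ∀ i j, H i j = pd j (pd i v) x :=
    ⟨_, fun _ _ => rfl⟩
  obtain ⟨g, hg⟩ : ∃ g : Fin n → ℝ, ∀ i, g i = pd i v x := ⟨_, fun _ => rfl⟩
  have ha0 : 0 < a := by rw [ha]; exact energy_pos hε v x
  have hga : ∑ i, g i ^ 2 ≤ a := by
    rw [ha, Finset.sum_congr rfl fun i _ => by rw [hg]]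
    exact le_add_of_nonneg_right hε.le
  have hsym : ∀ i j, H i j = H j i := fun i j => by rw [hH, hH, pd_comm j i hv]
  have coer := hc H hsym g a ha0 hga (trace_eq hε hv p x a ha H hH g hg hx)
  have cross := cross_bound H g (fun j => pd j φ x) a (φ x) c ha0 c0 hga
  have jac := jac_bound H g a (a ^ (q / 4)) q ha0 hga
  have hw : (a ^ (q / 4)) ^ 2 = a ^ (q / 2) := by
    rw [← Real.rpow_natCast, ← Real.rpow_mul ha0.le]; congr 1; push_cast; ring
  have hmu : mu ε v x ^ (p + s) = a ^ (q / 2) * a := by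
    rw [mu, ← ha, Real.sqrt_eq_rpow, ← Real.rpow_mul ha0.le, ← Real.rpow_add_one ha0.ne']
    congr 1; rw [hq]; ring
  rw [hw] at jac
  simp only [jacV_eq hε hv p s x a ha H hH g hg, ← hq]
  rw [sum_pd_flux hε hv hφ q x a ha H hH g hg, hmu]
  have w0 : 0 < a ^ (q / 2) := by positivity
  generalize a ^ (q / 2) = w at *
  have main : c / 2 * (w * φ x ^ 2 * ∑ i, ∑ j, H i j ^ 2) ≤
      w * (φ x ^ 2 * ((∑ i, ∑ j, H i j ^ 2)
        - (∑ i, H i i) ^ 2 + q / a * ((∑ i, (∑ j, H i j * g j) ^ 2)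
          - (∑ i, H i i) * ∑ i, (∑ j, H i j * g j) * g i))
      + ∑ i, ∑ j, 2 * φ x * pd j φ x * (H i j * g i - H i i * g j))
      + 8 * n / c * (w * a * ∑ i, pd i φ x ^ 2) := by
    have := mul_le_mul_of_nonneg_left
      (add_le_add (mul_le_mul_of_nonneg_left coer (sq_nonneg (φ x))) cross) w0.le
    linarith
  calc _ ≤ (2 + q ^ 2 / 2) * (w * ∑ i, ∑ j, H i j ^ 2) * φ x ^ 2 := by gcongr
    _ = (2 + q ^ 2 / 2) * (2 / c) * (c / 2 * (w * φ x ^ 2 * ∑ i, ∑ j, H i j ^ 2)) := by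
      field_simp
    _ ≤ _ := mul_le_mul_of_nonneg_left main (by positivity)
    _ = _ := by ring

end flux

/-! ### Localization and integration -/

/-- A smooth function on `U` agrees near the closed set `K ⊆ U` with a smooth function on the whole
space: multiply it by a cutoff. -/
theorem exists_global_extension {n : ℕ} {U K : Set (Fin n → ℝ)} (hU : IsOpen U)
    (hK : IsClosed K) (hKU : K ⊆ U) {u : (Fin n → ℝ) → ℝ} (hu : ContDiffOn ℝ (⊤ : ℕ∞) u U) :
    ∃ v : (Fin n → ℝ) → ℝ, ContDiff ℝ (⊤ : ℕ∞) v ∧ ∀ x ∈ K, v =ᶠ[nhds x] u := by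
  obtain ⟨χ, h0, h1, -⟩ := exists_contMDiffMap_zero_one_nhds_of_isClosed
    (modelWithCornersSelf ℝ (Fin n → ℝ)) (n := (⊤ : ℕ∞)) hU.isClosed_compl hK
    (Set.disjoint_compl_left_iff_subset.2 hKU)
  have hχ : ContDiff ℝ (⊤ : ℕ∞) χ := χ.contMDiff.contDiff
  refine ⟨fun x => χ x * u x, contDiff_iff_contDiffAt.2 fun x => ?_, fun x hx => ?_⟩
  · by_cases hx : x ∈ U
    · exact hχ.contDiffAt.mul (hu.contDiffAt (hU.mem_nhds hx))
    · have : (fun x => χ x * u x) =ᶠ[nhds x] fun _ => 0 := by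
        filter_upwards [h0.filter_mono (nhds_le_nhdsSet (s := Uᶜ) hx)] with y hy
        simp [hy]
      exact contDiffAt_const.congr_of_eventuallyEq this
  · filter_upwards [h1.filter_mono (nhds_le_nhdsSet hx)] with y hy
    simp [hy]

theorem grad_eventuallyEq {n : ℕ} {u v : (Fin n → ℝ) → ℝ} {x : Fin n → ℝ}
    (h : v =ᶠ[nhds x] u) : grad v =ᶠ[nhds x] grad u := by
  filter_upwards [h.fderiv (𝕜 := ℝ)] with y hy
  funext i
  simp only [grad, hy]

theorem fderiv_energy_rpow_mul_grad_congr {n : ℕ} {u v : (Fin n → ℝ) → ℝ} {x : Fin n → ℝ}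
    (h : v =ᶠ[nhds x] u) (ε r : ℝ) (i : Fin n) :
    fderiv ℝ (fun y => ((∑ j, grad v y j ^ 2) + ε) ^ r * grad v y i) x
      = fderiv ℝ (fun y => ((∑ j, grad u y j ^ 2) + ε) ^ r * grad u y i) x := by
  apply Filter.EventuallyEq.fderiv_eq
  filter_upwards [grad_eventuallyEq h] with y hy
  rw [hy]

open MeasureTheory in
/-- For `n ≥ 2`, `1 < p < ∞` and `s > −1 − (p−1)/(n−1)` there is a constant
`C = C(n, p, s) > 0`, independent of `ε` and `u`, such that for every `ε > 0`, every smooth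
solution `u` of the regularized `p`-Laplace equation in an open set `U ⊆ ℝⁿ` and every smooth
compactly supported `φ` with support in `U`,
`∫_U |D(μ^{(p−2+s)/2} Du)|² φ² ≤ C ∫_U μ^{p+s} |Dφ|²`. -/
theorem main_regularized_estimate (n : ℕ) (hn : 2 ≤ n) (p : ℝ) (hp : 1 < p)
    (s : ℝ) (hs : s > -1 - (p - 1) / ((n : ℝ) - 1)) :
    ∃ C > 0, ∀ (ε : ℝ), 0 < ε →
      ∀ (U : Set (Fin n → ℝ)), IsOpen U →
      ∀ (u : (Fin n → ℝ) → ℝ), ContDiffOn ℝ (⊤ : ℕ∞) u U →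
      RegularizedPLaplace p ε u U →
      ∀ (φ : (Fin n → ℝ) → ℝ), ContDiff ℝ (⊤ : ℕ∞) φ → HasCompactSupport φ →
        tsupport φ ⊆ U →
      (∫ x in U, (∑ i, ∑ j, jacV p s ε u x i j ^ 2) * φ x ^ 2)
        ≤ C * ∫ x in U, mu ε u x ^ (p + s)
            * (∑ i, (fderiv ℝ φ x (Pi.single i 1)) ^ 2) := by
  obtain ⟨C, C0, K, K0, hCK⟩ := pointwise_estimate hn hp hs
  refine ⟨C, C0, ?_⟩
  intro ε hε U hU u hu hpde φ hφ hφc hφU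
  obtain ⟨v, hv, hvu⟩ := exists_global_extension hU (isClosed_tsupport φ) hφU hu
  have flux0 : ∀ i j x, x ∉ tsupport φ → flux (p - 2 + s) ε v φ i j x = 0 := fun i j x hx => by
    simp [flux, image_eq_zero_of_notMem_tsupport hx]
  have fluxc : ∀ i j, HasCompactSupport (flux (p - 2 + s) ε v φ i j) := fun i j =>
    HasCompactSupport.intro hφc (flux0 i j)
  have Dflux := fun i j => integral_pd_eq_zero j (contDiff_flux hε hv hφ (p - 2 + s) i j)
    (fluxc i j)
  have pdflux0 : ∀ i j x, x ∉ tsupport φ → pd j (flux (p - 2 + s) ε v φ i j) x = 0 := by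
    intro i j x hx
    have : flux (p - 2 + s) ε v φ i j =ᶠ[nhds x] fun _ => 0 := by
      filter_upwards [(isClosed_tsupport φ).isOpen_compl.mem_nhds hx] with y hy
      exact flux0 i j y hy
    simp [pd, this.fderiv_eq]
  have pdφ0 : ∀ i x, x ∉ tsupport φ → pd i φ x = 0 := by
    intro i x hx
    have := image_eq_zero_of_notMem_tsupport (fun h => hx (tsupport_fderiv_subset ℝ h))
    simp [pd, this]
  set D : (Fin n → ℝ) → ℝ := fun x => ∑ i, ∑ j, pd j (flux (p - 2 + s) ε v φ i j) x with hD
  have Dint : Integrable D := integrable_finsetSum _ fun i _ =>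
    integrable_finsetSum _ fun j _ => (Dflux i j).1
  have D0 : ∫ x in U, D x = 0 := by
    rw [setIntegral_eq_integral_of_forall_compl_eq_zero, hD,
      integral_finsetSum _ fun i _ => integrable_finsetSum _ fun j _ => (Dflux i j).1]
    · refine Finset.sum_eq_zero fun i _ => ?_
      rw [integral_finsetSum _ fun j _ => (Dflux i j).1]
      exact Finset.sum_eq_zero fun j _ => (Dflux i j).2
    · intro x hx
      exact Finset.sum_eq_zero fun i _ => Finset.sum_eq_zero fun j _ =>
        pdflux0 i j x fun h => hx (hφU h)
  set R : (Fin n → ℝ) → ℝ := fun x => mu ε v x ^ (p + s) * ∑ i, pd i φ x ^ 2 with hR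
  have Ru : ∀ x, mu ε u x ^ (p + s) * (∑ i, (fderiv ℝ φ x (Pi.single i 1)) ^ 2) = R x := by
    intro x
    by_cases hx : x ∈ tsupport φ
    · simp only [hR, mu, (grad_eventuallyEq (hvu x hx)).eq_of_nhds, pd]
    · have : ∀ i, pd i φ x = 0 := fun i => pdφ0 i x hx
      simp only [pd] at this
      simp [hR, this, pd]
  have Rint : Integrable R := by
    refine Continuous.integrable_of_hasCompactSupport ?_ (HasCompactSupport.intro hφc fun x hx => ?_)
    · refine Continuous.mul ?_ (continuous_finsetSum _ fun i _ =>
        (contDiff_pd i hφ).continuous.pow 2)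
      exact ((contDiff_energy hv).continuous.sqrt).rpow_const fun x =>
        Or.inl (Real.sqrt_pos.2 (energy_pos hε v x)).ne'
    · simp [hR, pdφ0 _ x hx]
  simp only [Ru]
  calc _ ≤ ∫ x in U, (K * D x + C * R x) := by
        -- Only the right-hand side has to be integrable here, since the left one is nonnegative.
        refine integral_mono_of_nonneg (Filter.Eventually.of_forall fun x => ?_)
          ((Dint.const_mul K).add (Rint.const_mul C)).integrableOn
          (Filter.Eventually.of_forall fun x => ?_)
        · exact mul_nonneg (Finset.sum_nonneg fun i _ => Finset.sum_nonneg fun j _ => sq_nonneg _)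
            (sq_nonneg _)
        · by_cases hx : x ∈ tsupport φ
          · have h := hvu x hx
            have := hCK ε hε v hv φ hφ x (by
              simp only [fderiv_energy_rpow_mul_grad_congr h]
              exact hpde x (hφU hx))
            simpa only [jacV, Matrix.of_apply, fderiv_energy_rpow_mul_grad_congr h] using this
          · simp [hD, hR, image_eq_zero_of_notMem_tsupport hx, pdφ0 _ x hx, pdflux0 _ _ x hx]
    _ = C * ∫ x in U, R x := by
        rw [integral_add (Dint.const_mul K).integrableOn (Rint.const_mul C).integrableOn,
          integral_const_mul, integral_const_mul, D0]
        ring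
end

section
/- Let n ≥ 2, 1 < p < ∞, s ∈ ℝ, ε > 0, let U ⊆ ℝⁿ be open, and let u be a smooth function on U. Set μ := (|Du|² + ε)^{1/2}. Then at every point of U, |D(μ^{(p−2+s)/2} Du)|² = μ^{p−2+s} ( |D²u|² + (p−2+s)·|D²u Du|²/μ² + ((p−2+s)²/4)·|Du|²·|D²u Du|²/μ⁴ ), where D(μ^{(p−2+s)/2} Du) denotes the Jacobian matrix of the vector field x ↦ (|Du(x)|² + ε)^{(p−2+s)/4} Du(x) and |·| applied to matrices is the Hilbert–Schmidt (Frobenius) norm. -/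
/-- The Hessian matrix of `u : ℝⁿ → ℝ` at `x`, given by the second partial derivatives. -/
noncomputable def hess {n : ℕ} (u : (Fin n → ℝ) → ℝ) (x : Fin n → ℝ) :
    Matrix (Fin n) (Fin n) ℝ :=
  Matrix.of fun i j => fderiv ℝ (fun y => fderiv ℝ u y (Pi.single j 1)) x (Pi.single i 1)

/-- The squared Frobenius norm of the (transposed) rank-one update `H + c (H G) ⊗ G`. -/
theorem sum_sq_rank_one_update {n : ℕ} (H : Matrix (Fin n) (Fin n) ℝ) (G : Fin n → ℝ) (c : ℝ) :
    (∑ i, ∑ j, (H j i + c * H.mulVec G j * G i) ^ 2) =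
      (∑ i, ∑ j, H i j ^ 2) + 2 * c * (∑ i, H.mulVec G i ^ 2)
        + c ^ 2 * (∑ i, G i ^ 2) * (∑ i, H.mulVec G i ^ 2) := by
  rw [Finset.sum_comm]
  have key : ∀ j, (∑ i, (H j i + c * H.mulVec G j * G i) ^ 2) =
      (∑ i, H j i ^ 2) + 2 * c * H.mulVec G j ^ 2
        + c ^ 2 * (∑ i, G i ^ 2) * H.mulVec G j ^ 2 := by
    intro j
    have hV : H.mulVec G j = ∑ i, H j i * G i := rfl
    have expand : ∀ i, (H j i + c * H.mulVec G j * G i) ^ 2 = H j i ^ 2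
        + 2 * c * H.mulVec G j * (H j i * G i) + c ^ 2 * H.mulVec G j ^ 2 * G i ^ 2 :=
      fun i => by ring
    simp only [expand, Finset.sum_add_distrib, ← Finset.mul_sum, ← hV]
    ring
  simp only [key, Finset.sum_add_distrib, ← Finset.mul_sum]

/-- The entries of the Jacobian, by the product and chain rules. -/
theorem jacV_apply {n : ℕ} (p s ε : ℝ) (u : (Fin n → ℝ) → ℝ) (x : Fin n → ℝ)
    (hd : ∀ k, DifferentiableAt ℝ (fun y => grad u y k) x)
    (hW : 0 < (∑ k, grad u x k ^ 2) + ε) (i j : Fin n) :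
    jacV p s ε u x i j = ((∑ k, grad u x k ^ 2) + ε) ^ ((p - 2 + s) / 4) *
      (hess u x j i + (p - 2 + s) / 2 / ((∑ k, grad u x k ^ 2) + ε)
        * (hess u x).mulVec (grad u x) j * grad u x i) := by
  have hWd : HasFDerivAt (fun y => (∑ k, grad u y k ^ 2) + ε)
      (∑ k, (2 * grad u x k) • fderiv ℝ (fun y => grad u y k) x) x := by
    refine (HasFDerivAt.fun_sum fun k _ => ?_).add_const ε
    simpa using (hd k).hasFDerivAt.pow 2
  have hJ := (hWd.rpow_const (p := (p - 2 + s) / 4) (Or.inl hW.ne')).mul (hd i).hasFDerivAt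
  have hH : ∀ k, fderiv ℝ (fun y => grad u y k) x (Pi.single j 1) = hess u x j k := fun _ => rfl
  have hV : (∑ k, 2 * grad u x k * hess u x j k) = 2 * (hess u x).mulVec (grad u x) j := by
    simp only [Matrix.mulVec, dotProduct, Finset.mul_sum]
    exact Finset.sum_congr rfl fun k _ => by ring
  have hJ' := congrArg (fun L => L (Pi.single j 1)) hJ.fderiv
  refine Eq.trans hJ' ?_
  simp only [_root_.add_apply, _root_.smul_apply,
    _root_.sum_apply, smul_eq_mul, hH, hV, Real.rpow_sub_one hW.ne']
  field_simp
  ring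

/-- Pointwise identity: at every point of `U`,
`|D(μ^{(p−2+s)/2} Du)|² = μ^{p−2+s} (|D²u|² + (p−2+s) |D²u Du|²/μ²
  + ((p−2+s)²/4) |Du|² |D²u Du|²/μ⁴)`. -/
theorem jacobian_identity (n : ℕ) (hn : 2 ≤ n) (p : ℝ) (hp : 1 < p) (s : ℝ)
    (ε : ℝ) (hε : 0 < ε) (U : Set (Fin n → ℝ)) (hU : IsOpen U)
    (u : (Fin n → ℝ) → ℝ) (hu : ContDiffOn ℝ (⊤ : ℕ∞) u U)
    (x : Fin n → ℝ) (hx : x ∈ U) :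
    (∑ i, ∑ j, jacV p s ε u x i j ^ 2) =
      mu ε u x ^ (p - 2 + s) *
        ((∑ i, ∑ j, hess u x i j ^ 2)
          + (p - 2 + s) * (∑ i, ((hess u x).mulVec (grad u x) i) ^ 2)
              / ((∑ i, grad u x i ^ 2) + ε)
          + ((p - 2 + s) ^ 2 / 4) * (∑ i, grad u x i ^ 2)
              * (∑ i, ((hess u x).mulVec (grad u x) i) ^ 2)
              / ((∑ i, grad u x i ^ 2) + ε) ^ 2) := by
  have hW : 0 < (∑ i, grad u x i ^ 2) + ε :=
    add_pos_of_nonneg_of_pos (Finset.sum_nonneg fun i _ => sq_nonneg _) hε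
  have hd : ∀ k, DifferentiableAt ℝ (fun y => grad u y k) x := by
    intro k
    have h1 : ContDiffAt ℝ 1 (fderiv ℝ u) x :=
      (hu.contDiffAt (hU.mem_nhds hx)).fderiv_right (by norm_cast)
    exact (h1.differentiableAt one_ne_zero).clm_apply (differentiableAt_const _)
  have hpow : mu ε u x ^ (p - 2 + s) =
      (((∑ i, grad u x i ^ 2) + ε) ^ ((p - 2 + s) / 4)) ^ 2 := by
    rw [mu, Real.sqrt_eq_rpow, ← Real.rpow_mul hW.le, ← Real.rpow_mul_natCast hW.le]
    congr 1
    push_cast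
    ring
  have hsum := sum_sq_rank_one_update (hess u x) (grad u x)
    ((p - 2 + s) / 2 / ((∑ k, grad u x k ^ 2) + ε))
  simp only [jacV_apply p s ε u x hd hW, mul_pow (_ ^ ((p - 2 + s) / 4)) _ 2, ← Finset.mul_sum]
  rw [hsum, hpow]
  field_simp
  ring
end

section
/- Let 1 < p < ∞ and s > −p, and for ε ≥ 0 define V_s^ε : ℝⁿ → ℝⁿ by V_s^ε(z) := (|z|² + ε)^{(p−2+s)/4} z. Then there exist constants c₁ = c₁(p, s) > 0 and c₂ = c₂(p, s) > 0 such that for every ε ≥ 0 and all z, w ∈ ℝⁿ, c₁ (ε + |z|² + |w|²)^{(p−2+s)/2} |z − w|² ≤ |V_s^ε(z) − V_s^ε(w)|² ≤ c₂ (ε + |z|² + |w|²)^{(p−2+s)/2} |z − w|². -/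
/-!
Write `a = (p - 2 + s) / 4`, so that `a > -1/2`, and put `x = |z|`, `y = |w|`, `t = |z - w|²`,
`α = (x² + ε)^a`, `β = (y² + ε)^a`, where `y ≤ x` by symmetry. Expanding the square gives
`|αz - βw|² = αβ (t - (x - y)²) + (αx - βy)²`, with `(x - y)² ≤ t ≤ (x + y)²`,
so everything reduces to real numbers, and `|αz - βw|²` must be compared with `α² t`.

The radial term `αx - βy` is comparable to `α (x - y)` by Bernoulli's inequality; this is where
`a > -1/2` is needed, since it makes `r ↦ (r² + ε)^a r` increase at a rate comparable to
`(r² + ε)^a`. The transversal coefficient `αβ` is comparable to `α²` when `x² + ε ≤ 4 (y² + ε)`;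
otherwise `2y ≤ x`, so that `x²`, `t` and `(x - y)²` are comparable: the radial term alone gives the
lower bound, and the transversal term is at most of order `α² t` because `βy ≤ αx`.
Finally `x² + ε ≤ ε + x² + y² ≤ 2 (x² + ε)` replaces `α²` by `(ε + |z|² + |w|²)^(2a)`.
-/

/-- The vector field `V_s^ε(z) := (|z|² + ε)^{(p−2+s)/4} z` on `ℝⁿ`. -/
noncomputable def Vfield {n : ℕ} (p s ε : ℝ) (z : Fin n → ℝ) : Fin n → ℝ :=
  ((∑ i, z i ^ 2) + ε) ^ ((p - 2 + s) / 4) • z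

/-- Bernoulli's inequality is applied to the ratio `(y² + ε) / (x² + ε)`. -/
lemma radial_upper {a ε x y : ℝ} (ha : 0 ≤ a) (hε : 0 ≤ ε) (hy : 0 < y) (hyx : y ≤ x) :
    (x ^ 2 + ε) ^ a * x - (y ^ 2 + ε) ^ a * y ≤ (2 * a + 3) * ((x ^ 2 + ε) ^ a * (x - y)) := by
  have hx : 0 < x := hy.trans_le hyx
  have hA : 0 < x ^ 2 + ε := by positivity
  have hB : 0 < y ^ 2 + ε := by positivity
  obtain ⟨ρ, hρ⟩ : ∃ ρ, ρ = (y ^ 2 + ε) / (x ^ 2 + ε) := ⟨_, rfl⟩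
  have hρ0 : 0 < ρ := by rw [hρ]; positivity
  have hρ1 : ρ ≤ 1 := by
    rw [hρ, div_le_one hA]; nlinarith
  have hBA : y ^ 2 + ε = (x ^ 2 + ε) * ρ := by rw [hρ]; field_simp
  have hβ : (y ^ 2 + ε) ^ a = (x ^ 2 + ε) ^ a * ρ ^ a := by
    rw [hBA, Real.mul_rpow hA.le hρ0.le]
  -- The exponent is raised to `a + 1 ≥ 1` so that Bernoulli's inequality applies.
  have h1 : 1 + (a + 1) * (ρ - 1) ≤ ρ ^ a := by
    have h := one_add_mul_self_le_rpow_one_add (s := ρ - 1) (by linarith) (p := a + 1) (by linarith)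
    rw [add_sub_cancel] at h
    exact h.trans (Real.rpow_le_rpow_of_exponent_ge hρ0 hρ1 (by linarith))
  have h2 : (1 - ρ) * y ≤ 2 * (x - y) := by
    have e : (1 - ρ) * y * (x ^ 2 + ε) = (x - y) * ((x + y) * y) := by
      have : (1 - ρ) * (x ^ 2 + ε) = x ^ 2 - y ^ 2 := by linarith
      linear_combination y * this
    refine le_of_mul_le_mul_right ?_ hA
    rw [e]
    have : (x + y) * y ≤ 2 * (x ^ 2 + ε) := by nlinarith
    nlinarith [mul_le_mul_of_nonneg_left this (sub_nonneg.2 hyx)]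
  have hα : 0 < (x ^ 2 + ε) ^ a := Real.rpow_pos_of_pos hA a
  rw [hβ]
  have h3 : x - ρ ^ a * y ≤ (2 * a + 3) * (x - y) := by
    nlinarith [mul_le_mul_of_nonneg_right h1 hy.le,
      mul_le_mul_of_nonneg_left h2 (by linarith : 0 ≤ a + 1)]
  nlinarith [mul_le_mul_of_nonneg_left h3 hα.le]

/-- Since `(x² + ε) / (y² + ε) ≤ (x / y)²`, Bernoulli's inequality for the exponent `-2a ∈ [0, 1)`
applies to `x / y`. -/
lemma radial_lower {a ε x y : ℝ} (ha : a ≤ 0) (ha' : -1 / 2 < a) (hε : 0 ≤ ε) (hy : 0 < y)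
    (hyx : y ≤ x) :
    (1 + 2 * a) * ((x ^ 2 + ε) ^ a * (x - y)) ≤ (x ^ 2 + ε) ^ a * x - (y ^ 2 + ε) ^ a * y := by
  have hx : 0 < x := hy.trans_le hyx
  have hA : 0 < x ^ 2 + ε := by positivity
  have hB : 0 < y ^ 2 + ε := by positivity
  obtain ⟨r, hr⟩ : ∃ r, r = x / y := ⟨_, rfl⟩
  have hr0 : 0 < r := by rw [hr]; positivity
  have hr1 : 1 ≤ r := by rw [hr, one_le_div hy]; exact hyx
  have hxr : x = r * y := by rw [hr]; field_simp
  have hα : 0 < (x ^ 2 + ε) ^ a := Real.rpow_pos_of_pos hA a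
  have hβ : (y ^ 2 + ε) ^ a ≤ (x ^ 2 + ε) ^ a * r ^ (-(2 * a)) := by
    have h1 : (x ^ 2 + ε) / r ^ 2 ≤ y ^ 2 + ε := by
      rw [div_le_iff₀ (by positivity), hxr]
      nlinarith [mul_nonneg hε (by nlinarith : 0 ≤ r ^ 2 - 1)]
    have h2 := Real.rpow_le_rpow_of_nonpos (by positivity) h1 ha
    rw [Real.div_rpow hA.le (by positivity), ← Real.rpow_natCast r 2, ← Real.rpow_mul hr0.le,
      div_eq_mul_inv, ← Real.rpow_neg hr0.le] at h2
    simpa using h2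
  have h1 : r ^ (-(2 * a)) ≤ 1 + (-(2 * a)) * (r - 1) := by
    have h := rpow_one_add_le_one_add_mul_self (s := r - 1) (by linarith) (p := -(2 * a))
      (by linarith) (by linarith)
    rwa [add_sub_cancel] at h
  have h2 : r ^ (-(2 * a)) * y ≤ y - 2 * a * (x - y) := by
    have := mul_le_mul_of_nonneg_right h1 hy.le
    rw [hxr]; linarith
  nlinarith [mul_le_mul_of_nonneg_right hβ hy.le, mul_le_mul_of_nonneg_left h2 hα.le]

/-- For `y = 0` the middle term equals `α² t`, whatever the junk value of `β`. -/
lemma scalar_core_zero {c C α β x t : ℝ} (hc : c ≤ 1) (hC : 1 ≤ C) (h1 : (x - 0) ^ 2 ≤ t)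
    (h2 : t ≤ (x + 0) ^ 2) :
    c * (α ^ 2 * t) ≤ α * β * (t - (x - 0) ^ 2) + (α * x - β * 0) ^ 2 ∧
    α * β * (t - (x - 0) ^ 2) + (α * x - β * 0) ^ 2 ≤ C * (α ^ 2 * t) := by
  have ht : t = x ^ 2 := by linarith
  subst ht
  have h0 : 0 ≤ α ^ 2 * x ^ 2 := by positivity
  have e : α * β * (x ^ 2 - (x - 0) ^ 2) + (α * x - β * 0) ^ 2 = α ^ 2 * x ^ 2 := by ring
  rw [e]
  constructor <;> nlinarith

/-- The lower bound splits according to whether `2y ≤ x`; the upper one uses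
`β ≤ α` and the radial estimate. -/
lemma scalar_core_of_nonneg (a : ℝ) (ha0 : 0 ≤ a) :
    ∃ c > 0, ∃ C > 0, ∀ ε x y t : ℝ, 0 ≤ ε → 0 ≤ y → y ≤ x →
    (x - y) ^ 2 ≤ t → t ≤ (x + y) ^ 2 →
    c * (((x ^ 2 + ε) ^ a) ^ 2 * t) ≤ (x ^ 2 + ε) ^ a * (y ^ 2 + ε) ^ a * (t - (x - y) ^ 2)
        + ((x ^ 2 + ε) ^ a * x - (y ^ 2 + ε) ^ a * y) ^ 2 ∧
    (x ^ 2 + ε) ^ a * (y ^ 2 + ε) ^ a * (t - (x - y) ^ 2)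
        + ((x ^ 2 + ε) ^ a * x - (y ^ 2 + ε) ^ a * y) ^ 2 ≤ C * (((x ^ 2 + ε) ^ a) ^ 2 * t) := by
  have hk : (0 : ℝ) < (1 / 4) ^ a := by positivity
  refine ⟨min ((1 / 4) ^ a) (1 / 9), by positivity, (2 * a + 3) ^ 2, by positivity, ?_⟩
  intro ε x y t hε hy hyx h1 h2
  have hk9 : min ((1 / 4 : ℝ) ^ a) (1 / 9) ≤ 1 / 9 := min_le_right _ _
  have hk4 : min ((1 / 4 : ℝ) ^ a) (1 / 9) ≤ (1 / 4) ^ a := min_le_left _ _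
  generalize hkk : min ((1 / 4 : ℝ) ^ a) (1 / 9) = k at *
  rcases hy.eq_or_lt with rfl | hy
  · exact scalar_core_zero (by linarith) (by nlinarith) h1 h2
  have hU := radial_upper ha0 hε hy hyx
  have hx : 0 < x := hy.trans_le hyx
  have hA : 0 < x ^ 2 + ε := by positivity
  have hB : 0 < y ^ 2 + ε := by positivity
  have hα : 0 < (x ^ 2 + ε) ^ a := Real.rpow_pos_of_pos hA a
  have hβ : 0 < (y ^ 2 + ε) ^ a := Real.rpow_pos_of_pos hB a
  have hβα : (y ^ 2 + ε) ^ a ≤ (x ^ 2 + ε) ^ a :=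
    Real.rpow_le_rpow hB.le (by nlinarith) ha0
  have hcase : (1 / 4) ^ a * (x ^ 2 + ε) ^ a ≤ (y ^ 2 + ε) ^ a ∨ 2 * y ≤ x := by
    rcases le_total (1 / 4 * (x ^ 2 + ε)) (y ^ 2 + ε) with h | h
    · left
      rw [← Real.mul_rpow (by norm_num) hA.le]
      exact Real.rpow_le_rpow (by positivity) h ha0
    · right
      nlinarith
  generalize (x ^ 2 + ε) ^ a = α at *
  generalize (y ^ 2 + ε) ^ a = β at *
  have hd : 0 ≤ t - (x - y) ^ 2 := by linarith
  have hL : α * (x - y) ≤ α * x - β * y := by nlinarith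
  have hxy : 0 ≤ α * (x - y) := mul_nonneg hα.le (by linarith)
  have hL2 : (α * (x - y)) ^ 2 ≤ (α * x - β * y) ^ 2 := pow_le_pow_left₀ hxy hL 2
  have hU2 : (α * x - β * y) ^ 2 ≤ ((2 * a + 3) * (α * (x - y))) ^ 2 :=
    pow_le_pow_left₀ (hxy.trans hL) hU 2
  have hαd : 0 ≤ α * (t - (x - y) ^ 2) := mul_nonneg hα.le hd
  constructor
  · rcases hcase with h | h
    · have g1 : α ^ 2 * k * (t - (x - y) ^ 2) ≤ α * β * (t - (x - y) ^ 2) := by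
        have : k * α ≤ β := (mul_le_mul_of_nonneg_right hk4 hα.le).trans h
        nlinarith [mul_le_mul_of_nonneg_right this hαd]
      have g2 : k * (α * (x - y)) ^ 2 ≤ (α * (x - y)) ^ 2 := by
        nlinarith [sq_nonneg (α * (x - y))]
      linarith
    · have ht : t ≤ 9 * (x - y) ^ 2 := by nlinarith
      have g1 : 0 ≤ α * β * (t - (x - y) ^ 2) := by positivity
      have g2 : k * (α ^ 2 * t) ≤ 1 / 9 * (α ^ 2 * t) := by
        have : 0 ≤ t := (sq_nonneg _).trans h1
        exact mul_le_mul_of_nonneg_right hk9 (by positivity)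
      have g3 := mul_le_mul_of_nonneg_left ht (sq_nonneg α)
      linarith
  · have g1 : α * β * (t - (x - y) ^ 2) ≤ α ^ 2 * (t - (x - y) ^ 2) := by
      nlinarith [mul_le_mul_of_nonneg_right hβα hαd]
    have g2 : α ^ 2 * (t - (x - y) ^ 2) ≤ (2 * a + 3) ^ 2 * (α ^ 2 * (t - (x - y) ^ 2)) :=
      le_mul_of_one_le_left (by positivity) (by nlinarith)
    linarith

/-- The lower bound uses `α ≤ β` and the radial estimate; the upper one splits according to whether
`2y ≤ x`, in which case `βy ≤ αx` makes up for a large `β`. -/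
lemma scalar_core_of_nonpos (a : ℝ) (ha : -1 / 2 < a) (ha0 : a ≤ 0) :
    ∃ c > 0, ∃ C > 0, ∀ ε x y t : ℝ, 0 ≤ ε → 0 ≤ y → y ≤ x →
    (x - y) ^ 2 ≤ t → t ≤ (x + y) ^ 2 →
    c * (((x ^ 2 + ε) ^ a) ^ 2 * t) ≤ (x ^ 2 + ε) ^ a * (y ^ 2 + ε) ^ a * (t - (x - y) ^ 2)
        + ((x ^ 2 + ε) ^ a * x - (y ^ 2 + ε) ^ a * y) ^ 2 ∧
    (x ^ 2 + ε) ^ a * (y ^ 2 + ε) ^ a * (t - (x - y) ^ 2)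
        + ((x ^ 2 + ε) ^ a * x - (y ^ 2 + ε) ^ a * y) ^ 2 ≤ C * (((x ^ 2 + ε) ^ a) ^ 2 * t) := by
  have hk : (0 : ℝ) < (1 / 4) ^ a := by positivity
  refine ⟨(1 + 2 * a) ^ 2, pow_pos (by linarith) 2, (1 / 4) ^ a + 17, by positivity, ?_⟩
  intro ε x y t hε hy hyx h1 h2
  rcases hy.eq_or_lt with rfl | hy
  · exact scalar_core_zero (by nlinarith) (by linarith) h1 h2
  have hL := radial_lower ha0 ha hε hy hyx
  have hx : 0 < x := hy.trans_le hyx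
  have hA : 0 < x ^ 2 + ε := by positivity
  have hB : 0 < y ^ 2 + ε := by positivity
  have hα : 0 < (x ^ 2 + ε) ^ a := Real.rpow_pos_of_pos hA a
  have hβ : 0 < (y ^ 2 + ε) ^ a := Real.rpow_pos_of_pos hB a
  have hβα : (x ^ 2 + ε) ^ a ≤ (y ^ 2 + ε) ^ a :=
    Real.rpow_le_rpow_of_nonpos hB (by nlinarith) ha0
  have hcase : (y ^ 2 + ε) ^ a ≤ (1 / 4) ^ a * (x ^ 2 + ε) ^ a ∨ 2 * y ≤ x := by
    rcases le_total (1 / 4 * (x ^ 2 + ε)) (y ^ 2 + ε) with h | h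
    · left
      rw [← Real.mul_rpow (by norm_num) hA.le]
      exact Real.rpow_le_rpow_of_nonpos (by positivity) h ha0
    · right
      nlinarith
  generalize (x ^ 2 + ε) ^ a = α at *
  generalize (y ^ 2 + ε) ^ a = β at *
  generalize (1 / 4 : ℝ) ^ a = k at *
  have hd : 0 ≤ t - (x - y) ^ 2 := by linarith
  have hU : α * x - β * y ≤ α * (x - y) := by nlinarith
  have hxy : 0 ≤ (1 + 2 * a) * (α * (x - y)) :=
    mul_nonneg (by linarith) (mul_nonneg hα.le (by linarith))
  have hL2 : ((1 + 2 * a) * (α * (x - y))) ^ 2 ≤ (α * x - β * y) ^ 2 :=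
    pow_le_pow_left₀ hxy hL 2
  have hU2 : (α * x - β * y) ^ 2 ≤ (α * (x - y)) ^ 2 :=
    pow_le_pow_left₀ (hxy.trans hL) hU 2
  have hαd : 0 ≤ α * (t - (x - y) ^ 2) := mul_nonneg hα.le hd
  have ht0 : 0 ≤ t := (sq_nonneg _).trans h1
  have hαt : 0 ≤ α ^ 2 * t := by positivity
  have g0 : α ^ 2 * (x - y) ^ 2 ≤ α ^ 2 * t := mul_le_mul_of_nonneg_left h1 (sq_nonneg α)
  constructor
  · have g1 : α ^ 2 * (t - (x - y) ^ 2) ≤ α * β * (t - (x - y) ^ 2) := by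
      nlinarith [mul_le_mul_of_nonneg_right hβα hαd]
    have g2 : (1 + 2 * a) ^ 2 * (α ^ 2 * (t - (x - y) ^ 2)) ≤ α ^ 2 * (t - (x - y) ^ 2) :=
      mul_le_of_le_one_left (by positivity) (by nlinarith)
    linarith
  · rcases hcase with h | h
    · have g1 : α * β * (t - (x - y) ^ 2) ≤ k * (α ^ 2 * (t - (x - y) ^ 2)) := by
        nlinarith [mul_le_mul_of_nonneg_right h hαd]
      have g2 : k * (α ^ 2 * (t - (x - y) ^ 2)) ≤ k * (α ^ 2 * t) := by
        have : 0 ≤ k * α ^ 2 * (x - y) ^ 2 := by positivity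
        linarith
      linarith
    · have hβy : β * y ≤ α * x := by linarith
      have g1 : α * β * (t - (x - y) ^ 2) ≤ α * β * (4 * x * y) :=
        mul_le_mul_of_nonneg_left (by linarith) (by positivity)
      have g2 : α * β * (4 * x * y) ≤ 4 * (α ^ 2 * x ^ 2) := by
        nlinarith [mul_le_mul_of_nonneg_left hβy (by positivity : 0 ≤ α * x)]
      have g3 : α ^ 2 * x ^ 2 ≤ 4 * (α ^ 2 * (x - y) ^ 2) := by
        have : x ^ 2 ≤ 4 * (x - y) ^ 2 := by nlinarith
        nlinarith [mul_le_mul_of_nonneg_left this (sq_nonneg α)]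
      have g4 : 0 ≤ k * (α ^ 2 * t) := by positivity
      linarith

/-- The comparison for `|z| = x ≥ y = |w|` and `|z - w|² = t`, with the larger weight
`x² + ε` in place of the sum. -/
lemma scalar_core (a : ℝ) (ha : -1 / 2 < a) :
    ∃ c > 0, ∃ C > 0, ∀ ε x y t : ℝ, 0 ≤ ε → 0 ≤ y → y ≤ x →
    (x - y) ^ 2 ≤ t → t ≤ (x + y) ^ 2 →
    c * (((x ^ 2 + ε) ^ a) ^ 2 * t) ≤ (x ^ 2 + ε) ^ a * (y ^ 2 + ε) ^ a * (t - (x - y) ^ 2)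
        + ((x ^ 2 + ε) ^ a * x - (y ^ 2 + ε) ^ a * y) ^ 2 ∧
    (x ^ 2 + ε) ^ a * (y ^ 2 + ε) ^ a * (t - (x - y) ^ 2)
        + ((x ^ 2 + ε) ^ a * x - (y ^ 2 + ε) ^ a * y) ^ 2 ≤ C * (((x ^ 2 + ε) ^ a) ^ 2 * t) := by
  rcases le_total 0 a with ha0 | ha0
  · exact scalar_core_of_nonneg a ha0
  · exact scalar_core_of_nonpos a ha ha0

/-- The weights `A` and `S` stand for `x² + ε` and `ε + x² + y²`. -/
lemma weight_compare (a : ℝ) : ∃ k > 0, ∃ K > 0, ∀ A S : ℝ, 0 < A → A ≤ S → S ≤ 2 * A →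
    k * S ^ (2 * a) ≤ (A ^ a) ^ 2 ∧ (A ^ a) ^ 2 ≤ K * S ^ (2 * a) := by
  have h2 : ∀ x : ℝ, 0 < x → x ^ (2 * a) = (x ^ a) ^ 2 := fun x hx => by
    rw [mul_comm, Real.rpow_mul hx.le]; simp
  have hc : (0 : ℝ) < 2 ^ (2 * a) := by positivity
  rcases le_total 0 a with ha | ha
  · refine ⟨(2 ^ (2 * a))⁻¹, by positivity, 1, one_pos, fun A S hA hAS hS => ?_⟩
    have e1 := Real.rpow_le_rpow hA.le hAS (by linarith : 0 ≤ 2 * a)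
    have e2 := Real.rpow_le_rpow (hA.le.trans hAS) hS (by linarith : 0 ≤ 2 * a)
    rw [Real.mul_rpow (by norm_num) hA.le] at e2
    rw [← h2 A hA, one_mul]
    exact ⟨(inv_mul_le_iff₀ hc).2 e2, e1⟩
  · refine ⟨1, one_pos, (2 ^ (2 * a))⁻¹, by positivity, fun A S hA hAS hS => ?_⟩
    have e1 := Real.rpow_le_rpow_of_nonpos hA hAS (by linarith : 2 * a ≤ 0)
    have e2 := Real.rpow_le_rpow_of_nonpos (hA.trans_le hAS) hS (by linarith : 2 * a ≤ 0)
    rw [Real.mul_rpow (by norm_num) hA.le] at e2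
    rw [← h2 A hA, one_mul]
    exact ⟨e1, (le_inv_mul_iff₀ hc).2 e2⟩

/-- The polarized form of `|αz - βw|²` in terms of the norms `x`, `y` and of `|z - w|²`. -/
lemma sum_sq_smul_sub {n : ℕ} (z w : Fin n → ℝ) (α β x y : ℝ) (hx : ∑ i, z i ^ 2 = x ^ 2)
    (hy : ∑ i, w i ^ 2 = y ^ 2) :
    ∑ i, (α * z i - β * w i) ^ 2
      = α * β * ((∑ i, (z i - w i) ^ 2) - (x - y) ^ 2) + (α * x - β * y) ^ 2 := by
  have key : ∀ α β : ℝ, ∑ i, (α * z i - β * w i) ^ 2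
      = α ^ 2 * x ^ 2 + β ^ 2 * y ^ 2 - 2 * α * β * ∑ i, z i * w i := by
    intro α β
    rw [← hx, ← hy, Finset.mul_sum, Finset.mul_sum, Finset.mul_sum, ← Finset.sum_add_distrib,
      ← Finset.sum_sub_distrib]
    exact Finset.sum_congr rfl fun i _ => by ring
  have h1 := key 1 1
  simp only [one_mul] at h1
  rw [key, h1]
  ring


/-- For `1 < p < ∞` and `s > −p` there are constants
`c₁ = c₁(p, s) > 0`, `c₂ = c₂(p, s) > 0` such that for every `ε ≥ 0` and all `z, w ∈ ℝⁿ`,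
`c₁ (ε + |z|² + |w|²)^{(p−2+s)/2} |z − w|² ≤ |V_s^ε(z) − V_s^ε(w)|²
  ≤ c₂ (ε + |z|² + |w|²)^{(p−2+s)/2} |z − w|²`. -/
theorem algebraic_inequality (p : ℝ) (hp : 1 < p) (s : ℝ) (hs : s > -p) :
    ∃ c₁ > 0, ∃ c₂ > 0, ∀ (n : ℕ) (ε : ℝ), 0 ≤ ε → ∀ z w : Fin n → ℝ,
      c₁ * (ε + (∑ i, z i ^ 2) + (∑ i, w i ^ 2)) ^ ((p - 2 + s) / 2)
          * (∑ i, (z i - w i) ^ 2)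
        ≤ (∑ i, (Vfield p s ε z i - Vfield p s ε w i) ^ 2)
      ∧ (∑ i, (Vfield p s ε z i - Vfield p s ε w i) ^ 2)
        ≤ c₂ * (ε + (∑ i, z i ^ 2) + (∑ i, w i ^ 2)) ^ ((p - 2 + s) / 2)
            * (∑ i, (z i - w i) ^ 2) := by
  obtain ⟨c, hc, C, hC, core⟩ := scalar_core ((p - 2 + s) / 4) (by linarith)
  obtain ⟨k, hk, K, hK, weight⟩ := weight_compare ((p - 2 + s) / 4)
  rw [show 2 * ((p - 2 + s) / 4) = (p - 2 + s) / 2 by ring] at weight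
  refine ⟨c * k, mul_pos hc hk, C * K, mul_pos hC hK, fun n ε hε => ?_⟩
  -- The claim is symmetric in `z` and `w`, so it suffices to treat `|w| ≤ |z|`.
  have main : ∀ z w : Fin n → ℝ, ∑ i, w i ^ 2 ≤ ∑ i, z i ^ 2 →
      c * k * (ε + (∑ i, z i ^ 2) + (∑ i, w i ^ 2)) ^ ((p - 2 + s) / 2)
          * (∑ i, (z i - w i) ^ 2)
        ≤ (∑ i, (Vfield p s ε z i - Vfield p s ε w i) ^ 2)
      ∧ (∑ i, (Vfield p s ε z i - Vfield p s ε w i) ^ 2)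
        ≤ C * K * (ε + (∑ i, z i ^ 2) + (∑ i, w i ^ 2)) ^ ((p - 2 + s) / 2)
            * (∑ i, (z i - w i) ^ 2) := by
    intro z w hwz
    have hz0 : 0 ≤ ∑ i, z i ^ 2 := Finset.sum_nonneg fun i _ => sq_nonneg _
    have hw0 : 0 ≤ ∑ i, w i ^ 2 := Finset.sum_nonneg fun i _ => sq_nonneg _
    have ht0 : 0 ≤ ∑ i, (z i - w i) ^ 2 := Finset.sum_nonneg fun i _ => sq_nonneg _
    rcases hz0.eq_or_lt with hz | hz
    · -- Here `z = w = 0`, and all three terms vanish whatever the value of `0 ^ _` is.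
      have hz' : z = 0 := funext fun i => by
        have := (Finset.sum_eq_zero_iff_of_nonneg fun i _ => sq_nonneg (z i)).1 hz.symm i
          (Finset.mem_univ i)
        simpa using this
      have hw' : w = 0 := funext fun i => by
        have := (Finset.sum_eq_zero_iff_of_nonneg fun i _ => sq_nonneg (w i)).1
          (le_antisymm (hwz.trans hz.ge) hw0) i (Finset.mem_univ i)
        simpa using this
      subst hz' hw'
      simp
    obtain ⟨x, hx0, hx⟩ : ∃ x, 0 ≤ x ∧ ∑ i, z i ^ 2 = x ^ 2 :=
      ⟨√(∑ i, z i ^ 2), Real.sqrt_nonneg _, (Real.sq_sqrt hz0).symm⟩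
    obtain ⟨y, hy0, hy⟩ : ∃ y, 0 ≤ y ∧ ∑ i, w i ^ 2 = y ^ 2 :=
      ⟨√(∑ i, w i ^ 2), Real.sqrt_nonneg _, (Real.sq_sqrt hw0).symm⟩
    have hV := sum_sq_smul_sub z w ((x ^ 2 + ε) ^ ((p - 2 + s) / 4))
      ((y ^ 2 + ε) ^ ((p - 2 + s) / 4)) x y hx hy
    have hyx : y ≤ x := by
      rw [hx, hy] at hwz
      exact (pow_le_pow_iff_left₀ hy0 hx0 two_ne_zero).1 hwz
    have hCS : |∑ i, z i * w i| ≤ x * y := by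
      refine abs_le_of_sq_le_sq ?_ (by positivity)
      have := Finset.sum_mul_sq_le_sq_mul_sq Finset.univ z w
      rw [hx, hy] at this
      rwa [mul_pow]
    have ht : ∑ i, (z i - w i) ^ 2 = x ^ 2 + y ^ 2 - 2 * ∑ i, z i * w i := by
      rw [← hx, ← hy, Finset.mul_sum, ← Finset.sum_add_distrib, ← Finset.sum_sub_distrib]
      exact Finset.sum_congr rfl fun i _ => by ring
    have hCS' := abs_le.1 hCS
    obtain ⟨lo, hi⟩ := core ε x y (∑ i, (z i - w i) ^ 2) hε hy0 hyx
      (by rw [ht]; linarith) (by rw [ht]; linarith)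
    rw [← hV] at lo hi
    rw [hx] at hz
    obtain ⟨wlo, whi⟩ := weight (x ^ 2 + ε) (ε + x ^ 2 + y ^ 2) (by linarith)
      (by nlinarith) (by nlinarith)
    simp only [Vfield, Pi.smul_apply, smul_eq_mul, hx, hy]
    constructor
    · refine le_trans ?_ lo
      rw [mul_assoc c, mul_assoc c]
      exact mul_le_mul_of_nonneg_left (mul_le_mul_of_nonneg_right wlo ht0) hc.le
    · refine hi.trans ?_
      rw [mul_assoc C, mul_assoc C]
      exact mul_le_mul_of_nonneg_left (mul_le_mul_of_nonneg_right whi ht0) hC.le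
  intro z w
  rcases le_total (∑ i, w i ^ 2) (∑ i, z i ^ 2) with h | h
  · exact main z w h
  · have := main w z h
    simp only [sub_sq_comm (w _), sub_sq_comm (Vfield p s ε w _)] at this
    rwa [add_right_comm] at this
end
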